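/- arXiv:2009.10302 — 5 statements merged into one kernel-verified Lean document; each statement's English description precedes it below -/
import Mathlib

section
/- For every ε > 0 and every t > 0, the radial Eguchi–Hanson potential satisfies the Monge–Ampère equation (deriv ψ_ε t)·(deriv ψ_ε t + t·deriv (deriv ψ_ε) t) = 1, where deriv denotes the derivative of a real function; this expresses that the volume form of the Eguchi–Hanson Kähler form i∂∂̄F_ε on (ℂ²∖{0})/±1 equals the Euclidean volume form, i.e. the Eguchi–Hanson metric is Ricci-flat. -/
/-- The radial Eguchi–Hanson potential `ψ_ε(t)` in the variable `t = ‖z‖²`. -/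
noncomputable def radialEH (ε : ℝ) (t : ℝ) : ℝ :=
  Real.sqrt (t ^ 2 + ε ^ 2) + ε * Real.log (t / (Real.sqrt (t ^ 2 + ε ^ 2) + ε))

theorem hasDerivAt_sqrt_aux (ε t : ℝ) (hε : 0 < ε) :
    HasDerivAt (fun x : ℝ => Real.sqrt (x ^ 2 + ε ^ 2)) (t / Real.sqrt (t ^ 2 + ε ^ 2)) t := by
  have h : HasDerivAt (fun x : ℝ => x ^ 2 + ε ^ 2) (2 * t) t := by
    simpa using (hasDerivAt_pow 2 t).add_const (ε ^ 2)
  have h2 := h.sqrt (by positivity)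
  convert h2 using 1
  have : 0 < Real.sqrt (t ^ 2 + ε ^ 2) := Real.sqrt_pos.mpr (by positivity)
  field_simp

theorem hasDerivAt_radialEH_aux (ε t : ℝ) (hε : 0 < ε) (ht : 0 < t) :
    HasDerivAt (radialEH ε) (Real.sqrt (t ^ 2 + ε ^ 2) / t) t := by
  have hs := hasDerivAt_sqrt_aux ε t hε
  have hp : 0 < Real.sqrt (t ^ 2 + ε ^ 2) := Real.sqrt_pos.mpr (by positivity)
  have hq : Real.sqrt (t ^ 2 + ε ^ 2) ^ 2 = t ^ 2 + ε ^ 2 := Real.sq_sqrt (by positivity)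
  have hd := (hasDerivAt_id t).div (hs.add_const ε) (by positivity)
  have hl := hs.add ((hd.log (by simp only [Pi.div_apply, id]; positivity)).const_mul ε)
  refine HasDerivAt.congr_deriv hl ?_
  simp only [Pi.div_apply, id]
  generalize Real.sqrt (t ^ 2 + ε ^ 2) = s at hp hq
  have h1 : s + ε ≠ 0 := by positivity
  have ht2 : t ^ 2 = s ^ 2 - ε ^ 2 := by linarith
  field_simp
  rw [ht2]
  ring

/-- Monge–Ampère equation for the radial Eguchi–Hanson potential:
`ψ_ε'(t)·(ψ_ε'(t) + t·ψ_ε''(t)) = 1` for all `ε > 0`, `t > 0`.  This expresses that the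
volume form of the Eguchi–Hanson Kähler form equals the Euclidean volume form, i.e. the
Eguchi–Hanson metric is Ricci-flat. -/
theorem radialEH_mongeAmpere (ε t : ℝ) (hε : 0 < ε) (ht : 0 < t) :
    deriv (radialEH ε) t *
      (deriv (radialEH ε) t + t * deriv (deriv (radialEH ε)) t) = 1 := by
  have h1 : deriv (radialEH ε) t = Real.sqrt (t ^ 2 + ε ^ 2) / t :=
    (hasDerivAt_radialEH_aux ε t hε ht).deriv
  have he : deriv (radialEH ε) =ᶠ[nhds t] fun x => Real.sqrt (x ^ 2 + ε ^ 2) / x := by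
    filter_upwards [lt_mem_nhds ht] with x hx
    exact (hasDerivAt_radialEH_aux ε x hε hx).deriv
  have hd : HasDerivAt (fun x => Real.sqrt (x ^ 2 + ε ^ 2) / x) _ t :=
    (hasDerivAt_sqrt_aux ε t hε).div (hasDerivAt_id t) ht.ne'
  rw [he.deriv_eq, hd.deriv, h1]
  have hp : 0 < Real.sqrt (t ^ 2 + ε ^ 2) := Real.sqrt_pos.mpr (by positivity)
  generalize Real.sqrt (t ^ 2 + ε ^ 2) = s at hp
  field_simp
  ring
end

section
/- There exists a constant C > 0 such that for every ε ∈ (0,1] and every z ∈ ℂ² with ‖z‖ ≥ 2, the error term satisfies |F_ε(z) − ‖z‖²| ≤ C·ε²·(√ε + ‖z‖)⁻². -/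
/-- The Eguchi–Hanson potential `F ε` on `ℂ² ∖ {0}`. -/
noncomputable def eguchiHanson (ε : ℝ) (z : EuclideanSpace ℂ (Fin 2)) : ℝ :=
  Real.sqrt (‖z‖ ^ 4 + ε ^ 2) +
    ε * Real.log (‖z‖ ^ 2 / (Real.sqrt (‖z‖ ^ 4 + ε ^ 2) + ε))

/-- There is a constant `C > 0` such that for every `ε ∈ (0,1]` and every `z` with
`‖z‖ ≥ 2`, the error term satisfies `|F_ε(z) − ‖z‖²| ≤ C·ε²·(√ε + ‖z‖)⁻²`. -/
theorem eguchiHanson_error_bound_far :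
    ∃ C : ℝ, 0 < C ∧ ∀ ε : ℝ, 0 < ε → ε ≤ 1 →
      ∀ z : EuclideanSpace ℂ (Fin 2), 2 ≤ ‖z‖ →
        |eguchiHanson ε z - ‖z‖ ^ 2| ≤ C * ε ^ 2 * (Real.sqrt ε + ‖z‖)⁻¹ ^ 2 := by
  refine ⟨8, by norm_num, ?_⟩
  intro ε h0 h1 z hz
  unfold eguchiHanson
  generalize ‖z‖ = n at *
  have hn : 0 < n := by linarith
  have hr : 0 < n ^ 2 := by positivity
  have h4 : n ^ 4 = (n ^ 2) ^ 2 := by ring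
  have hr4 : 4 ≤ n ^ 2 := by nlinarith
  have hs1 : Real.sqrt ε ≤ 1 := Real.sqrt_le_one.mpr h1
  have hs0 : 0 ≤ Real.sqrt ε := Real.sqrt_nonneg ε
  have hfin : 2 * (ε ^ 2 / n ^ 2) ≤ 8 * ε ^ 2 * (Real.sqrt ε + n)⁻¹ ^ 2 := by
    have hle : (Real.sqrt ε + n) ^ 2 ≤ 4 * n ^ 2 := by nlinarith
    have hp : 0 < (Real.sqrt ε + n) ^ 2 := by positivity
    rw [inv_pow, ← div_eq_mul_inv, ← mul_div_assoc, div_le_div_iff₀ hr hp]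
    nlinarith [mul_le_mul_of_nonneg_left hle (sq_nonneg ε)]
  refine le_trans ?_ hfin
  rw [h4]
  generalize n ^ 2 = r at *
  have hS0 : r ≤ Real.sqrt (r ^ 2 + ε ^ 2) := Real.le_sqrt_of_sq_le (by nlinarith)
  have hS1 : Real.sqrt (r ^ 2 + ε ^ 2) ≤ r + ε ^ 2 / r := by
    apply Real.sqrt_le_iff.mpr
    refine ⟨by positivity, ?_⟩
    have : r * (ε ^ 2 / r) = ε ^ 2 := by field_simp
    nlinarith [sq_nonneg (ε ^ 2 / r), sq_nonneg ε]
  have hd : 0 ≤ ε ^ 2 / r := by positivity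
  have hd1 : ε ^ 2 / r ≤ ε := by
    rw [div_le_iff₀ hr]; nlinarith
  generalize Real.sqrt (r ^ 2 + ε ^ 2) = S at *
  have hSp : 0 < S + ε := by linarith
  have hL0 : Real.log (r / (S + ε)) ≤ 0 :=
    Real.log_nonpos (by positivity) ((div_le_one hSp).mpr (by linarith))
  have hL1 : 1 - (r / (S + ε))⁻¹ ≤ Real.log (r / (S + ε)) :=
    Real.one_sub_inv_le_log_of_pos (by positivity)
  have hL2 : -(2 * ε / r) ≤ 1 - (r / (S + ε))⁻¹ := by
    rw [inv_div]
    have h : (S + ε) / r ≤ (r + 2 * ε) / r := by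
      apply div_le_div_of_nonneg_right _ hr.le
      linarith
    rw [add_div r, div_self hr.ne'] at h
    linarith
  have hm := mul_le_mul_of_nonneg_left (hL2.trans hL1) h0.le
  have hm0 := mul_nonpos_of_nonneg_of_nonpos h0.le hL0
  have he : ε * -(2 * ε / r) = -(2 * (ε ^ 2 / r)) := by ring
  rw [he] at hm
  rw [abs_le]
  constructor <;> linarith
end

section
/- There exists a constant C > 0 such that for every ε ∈ (0,1] and every z ∈ ℂ² with 0 < ‖z‖ ≤ 2, the error term satisfies |F_ε(z) − ‖z‖²| ≤ C·ε·(1 + |log ‖z‖| + |log ε|). -/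
/-- There is a constant `C > 0` such that for every `ε ∈ (0,1]` and every `z` with
`0 < ‖z‖ ≤ 2`, the error term satisfies
`|F_ε(z) − ‖z‖²| ≤ C·ε·(1 + |log ‖z‖| + |log ε|)`. -/
theorem eguchiHanson_error_bound_near :
    ∃ C : ℝ, 0 < C ∧ ∀ ε : ℝ, 0 < ε → ε ≤ 1 →
      ∀ z : EuclideanSpace ℂ (Fin 2), 0 < ‖z‖ → ‖z‖ ≤ 2 →
        |eguchiHanson ε z - ‖z‖ ^ 2| ≤
          C * ε * (1 + |Real.log ‖z‖| + |Real.log ε|) := by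
  refine ⟨7, by norm_num, ?_⟩
  intro ε hε hε1 z hz hz2
  unfold eguchiHanson
  generalize ‖z‖ = r at *
  have h1 : r ^ 2 ≤ Real.sqrt (r ^ 4 + ε ^ 2) := by
    apply Real.le_sqrt_of_sq_le
    nlinarith [sq_nonneg ε]
  have h2 : Real.sqrt (r ^ 4 + ε ^ 2) ≤ r ^ 2 + ε := by
    apply Real.sqrt_le_iff.mpr
    constructor
    · positivity
    · nlinarith [mul_pos (pow_pos hz 2) hε]
  generalize Real.sqrt (r ^ 4 + ε ^ 2) = S at *
  have hr2 : 0 < r ^ 2 := by positivity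
  have hS : 0 < S + ε := by linarith
  rw [Real.log_div hr2.ne' hS.ne', Real.log_pow]
  have h3 : Real.log (S + ε) ≤ 5 := by
    have := Real.log_le_sub_one_of_pos hS
    nlinarith
  have h4 : Real.log ε ≤ Real.log (S + ε) := Real.log_le_log hε (by linarith)
  have a1 := le_abs_self (Real.log r)
  have a2 := neg_abs_le (Real.log r)
  have a4 := neg_abs_le (Real.log ε)
  have b1 := abs_nonneg (Real.log ε)
  have b2 := abs_nonneg (Real.log r)
  generalize |Real.log r| = A at *
  generalize |Real.log ε| = B at *
  generalize Real.log (S + ε) = L at *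
  push_cast
  rw [abs_le]
  have u : ε * (2 * Real.log r - L) ≤ ε * (2 * A + B) :=
    mul_le_mul_of_nonneg_left (by linarith) hε.le
  have l : ε * (-(2 * A + 5)) ≤ ε * (2 * Real.log r - L) :=
    mul_le_mul_of_nonneg_left (by linarith) hε.le
  have c1 := mul_nonneg hε.le b1
  have c2 := mul_nonneg hε.le b2
  constructor <;> nlinarith
end

section
/- For every compact subset K of ℂ² ∖ {0}, the Eguchi–Hanson potentials F_ε converge uniformly on K to the Euclidean potential as ε → 0⁺: sup_{z ∈ K} |F_ε(z) − ‖z‖²| tends to 0 as ε tends to 0 from the right. -/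
open Filter Topology

theorem eh_bound (ε m : ℝ) (hε : 0 < ε) (hm : 0 < m) (z : EuclideanSpace ℂ (Fin 2))
    (hz : m ≤ ‖z‖ ^ 2) : |eguchiHanson ε z - ‖z‖ ^ 2| ≤ ε + 2 * ε ^ 2 / m := by
  unfold eguchiHanson
  have e4 : ‖z‖ ^ 4 = (‖z‖ ^ 2) ^ 2 := by ring
  rw [e4]
  generalize ‖z‖ ^ 2 = r at hz
  have hr : 0 < r := lt_of_lt_of_le hm hz
  have h1 : r ≤ Real.sqrt (r ^ 2 + ε ^ 2) := Real.le_sqrt_of_sq_le (by nlinarith)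
  have h2 : Real.sqrt (r ^ 2 + ε ^ 2) ≤ r + ε :=
    Real.sqrt_le_iff.2 ⟨by positivity, by nlinarith [mul_pos hr hε]⟩
  generalize Real.sqrt (r ^ 2 + ε ^ 2) = s at h1 h2
  have hs : 0 < s + ε := by linarith
  have h3 : Real.log (r / (s + ε)) ≤ 0 :=
    Real.log_nonpos (by positivity) ((div_le_one hs).2 (by linarith))
  have h4 := Real.one_sub_inv_le_log_of_pos (div_pos hr hs)
  have h5 : (r / (s + ε))⁻¹ ≤ 1 + 2 * ε / m := by
    rw [inv_div]
    have a : (s + ε) / r ≤ (r + 2 * ε) / r := div_le_div_of_nonneg_right (by linarith) hr.le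
    have b : (r + 2 * ε) / r = 1 + 2 * ε / r := by field_simp
    have c : 2 * ε / r ≤ 2 * ε / m := by gcongr
    linarith
  have h6 : -(2 * ε / m) ≤ Real.log (r / (s + ε)) := by linarith
  have h7 := mul_le_mul_of_nonneg_left h6 hε.le
  have h8 : ε * -(2 * ε / m) = -(2 * ε ^ 2 / m) := by ring
  have h9 := mul_nonpos_of_nonneg_of_nonpos hε.le h3
  have h10 : 0 ≤ 2 * ε ^ 2 / m := by positivity
  rw [abs_le]
  constructor <;> linarith

/-- On every compact subset `K` of `ℂ² ∖ {0}`, the Eguchi–Hanson potentials `F_ε`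
converge uniformly to the Euclidean potential `‖z‖²` as `ε → 0⁺`:
`sup_{z ∈ K} |F_ε(z) − ‖z‖²| → 0`. -/
theorem eguchiHanson_tendsto_uniformly_on_compact
    (K : Set (EuclideanSpace ℂ (Fin 2))) (hK : IsCompact K) (h0 : (0 : EuclideanSpace ℂ (Fin 2)) ∉ K) :
    Tendsto (fun ε : ℝ => ⨆ z ∈ K, |eguchiHanson ε z - ‖z‖ ^ 2|)
      (𝓝[>] (0 : ℝ)) (𝓝 0) := by
  obtain ⟨δ, hδ, hb⟩ := Metric.isOpen_iff.1 hK.isClosed.isOpen_compl 0 h0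
  have hm : 0 < δ ^ 2 := by positivity
  have hz : ∀ z ∈ K, δ ^ 2 ≤ ‖z‖ ^ 2 := by
    intro z hz
    have : δ ≤ ‖z‖ := by
      by_contra h
      exact hb (by simpa using h) hz
    gcongr
  have hlim : Tendsto (fun ε : ℝ => ε + 2 * ε ^ 2 / δ ^ 2) (𝓝[>] (0 : ℝ)) (𝓝 0) := by
    have : Continuous (fun ε : ℝ => ε + 2 * ε ^ 2 / δ ^ 2) := by fun_prop
    have h := this.tendsto 0
    simp only [ne_eq, OfNat.ofNat_ne_zero, not_false_eq_true, zero_pow, mul_zero, zero_div,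
      add_zero] at h
    exact h.mono_left nhdsWithin_le_nhds
  refine tendsto_of_tendsto_of_tendsto_of_le_of_le' tendsto_const_nhds hlim ?_ ?_
  · exact Eventually.of_forall fun ε =>
      Real.iSup_nonneg fun z => Real.iSup_nonneg fun _ => abs_nonneg _
  · filter_upwards [self_mem_nhdsWithin] with ε hε
    have hε' : 0 < ε := hε
    have h0 : 0 ≤ ε + 2 * ε ^ 2 / δ ^ 2 := by positivity
    exact Real.iSup_le (fun z => Real.iSup_le (fun h => eh_bound ε _ hε' hm z (hz z h)) h0) h0
end

section
/- Let λ : ℕ → ℝ be a nondecreasing sequence indexed by the positive integers, let λ' > 0 with λ_1 ≥ λ', and let A > 0. Assume that for every t ∈ (0,1] the series Σ_{i≥1} exp(−t·λ_i) converges and Σ_{i≥1} exp(−t·λ_i) ≤ A·t⁻². Then for every k ≥ 1, λ_k ≥ A^{-1/2}·λ'·exp(−λ'/2)·√k. -/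
open Real

/-- Abstract eigenvalue lower bound: if `λ` is a nondecreasing sequence (indexed by the
positive integers) with `λ₁ ≥ λ' > 0`, and the heat trace satisfies the uniform bound
`Σ_{i≥1} exp(−t·λᵢ) ≤ A·t⁻²` for all `t ∈ (0,1]`, then
`λ_k ≥ A^{-1/2}·λ'·exp(−λ'/2)·√k` for every `k ≥ 1`. -/
theorem eigenvalue_lower_bound (lam : ℕ → ℝ) (lam' A : ℝ)
    (hmono : ∀ i j : ℕ, 1 ≤ i → i ≤ j → lam i ≤ lam j)
    (hlam' : 0 < lam') (h1 : lam' ≤ lam 1) (hA : 0 < A)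
    (hsum : ∀ t : ℝ, 0 < t → t ≤ 1 →
      Summable (fun i : ℕ => Real.exp (-(t * lam (i + 1)))) ∧
      ∑' i : ℕ, Real.exp (-(t * lam (i + 1))) ≤ A * t⁻¹ ^ 2) :
    ∀ k : ℕ, 1 ≤ k →
      A ^ (-(1 : ℝ) / 2) * lam' * Real.exp (-lam' / 2) * Real.sqrt k ≤ lam k := by
  intro k hk
  have hL : lam' ≤ lam k := h1.trans (hmono 1 k le_rfl hk)
  have hL0 : 0 < lam k := hlam'.trans_le hL
  obtain ⟨hs, hb⟩ := hsum (lam' / lam k) (div_pos hlam' hL0) ((div_le_one hL0).2 hL)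
  have hfin := hs.sum_le_tsum (Finset.range k) (fun i _ => (Real.exp_pos _).le)
  have hlow : (k : ℝ) * Real.exp (-lam') ≤
      ∑ i ∈ Finset.range k, Real.exp (-(lam' / lam k * lam (i + 1))) := by
    have h := Finset.card_nsmul_le_sum (Finset.range k)
      (fun i => Real.exp (-(lam' / lam k * lam (i + 1)))) (Real.exp (-lam')) (by
        intro i hi
        apply Real.exp_le_exp.2
        have h2 : lam (i + 1) ≤ lam k :=
          hmono _ _ (by omega) (by have := Finset.mem_range.1 hi; omega)
        have h3 : lam' / lam k * lam (i + 1) ≤ lam' / lam k * lam k :=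
          mul_le_mul_of_nonneg_left h2 (div_pos hlam' hL0).le
        rw [div_mul_cancel₀ _ hL0.ne'] at h3
        linarith)
    simpa using h
  have hmain : (k : ℝ) * Real.exp (-lam') ≤ A * (lam' / lam k)⁻¹ ^ 2 :=
    hlow.trans (hfin.trans hb)
  rw [inv_div, div_pow, ← mul_div_assoc, le_div_iff₀ (by positivity)] at hmain
  have hA2 : (A ^ (-(1 : ℝ) / 2)) ^ 2 = A⁻¹ := by
    rw [← Real.rpow_natCast, ← Real.rpow_mul hA.le, ← Real.rpow_neg_one]
    norm_num
  have hE : Real.exp (-lam' / 2) ^ 2 = Real.exp (-lam') := by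
    rw [← Real.exp_nat_mul]
    congr 1
    push_cast
    ring
  have hK : Real.sqrt k ^ 2 = (k : ℝ) := Real.sq_sqrt (Nat.cast_nonneg k)
  refine (pow_le_pow_iff_left₀ (by positivity) hL0.le two_ne_zero).1 ?_
  rw [mul_pow, mul_pow, mul_pow, hA2, hE, hK]
  calc A⁻¹ * lam' ^ 2 * Real.exp (-lam') * k
      = A⁻¹ * (k * Real.exp (-lam') * lam' ^ 2) := by ring
    _ ≤ A⁻¹ * (A * lam k ^ 2) := mul_le_mul_of_nonneg_left hmain (inv_pos.2 hA).le
    _ = lam k ^ 2 := by field_simp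
end
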